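/- Unforgeable polynomials' linear combination (Theorem 7, counting form): Let p be a prime, F = ZMod p, and fix d, D, n ∈ ℕ, 1 ≤ t ≤ n, and polynomials π_1, …, π_n ∈ F[X] with natDegree π_j ≤ d for all j. Consider the finite sample space Ω of tuples (a, b, w⃗, g⃗) with a ∈ F \ {0}, b ∈ F, w⃗ = (w_1, …, w_n) ∈ (F^{d+1})^n and g⃗ = (g_1, …, g_n) ∈ (F^{2d+2})^n; set ζ = a·X + b, ω_j = Σ_i (w_j)_i·X^i, γ_j = Σ_i (g_j)_i·X^i, and θ_j = ζ·ω_j·π_j + γ_j. Let A : (F[X])^n → (F[X])^t be an arbitrary function (the adversary, which sees θ_1, …, θ_n and the public π_j's) each of whose output components has natDegree ≤ D, and write (δ_1, …, δ_t) = A(θ_1, …, θ_n). Then p · #{(a, b, w⃗, g⃗) ∈ Ω : Σ_{j=1}^{t} δ_j ≠ Σ_{j=1}^{t} θ_j and ζ divides Σ_{j=1}^{t} δ_j + Σ_{j=t+1}^{n} θ_j − Σ_{j=1}^{n} γ_j} ≤ max(D, 2d+1) · #Ω; i.e., the forgery succeeds with probability at most max(D, 2d+1)/p. -/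

import Mathlib

open Polynomial

/-!
For fixed `a`, `b`, `w`, the masks `γ j` range uniformly over the polynomials of degree at most
`2d+1`, and `ζ * ω j * π j` has degree at most `2d+1`.  Hence the coefficients `h` of the `θ j` may
be used as coordinates in place of `g`, and in the coordinates `(a, b, w, h)` the adversary's view
does not depend on `b`.  The tested polynomial is congruent modulo `ζ` to
`q = ∑ δ j - ∑_{j<t} θ j`, so a successful forgery forces `-b/a` to be a root of the nonzero
polynomial `q`, which depends only on `h` and has degree at most `max D (2d+1)`.  So each triple
`(a, w, h)` admits at most `max D (2d+1)` of the `p` values of `b` (`card_le_of_fiber_roots`).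
-/

/-- The polynomial with coefficient vector `v`. -/
noncomputable def vecPoly {R : Type*} [Semiring R] {m : ℕ} (v : Fin m → R) : R[X] :=
  ∑ i, C (v i) * X ^ (i : ℕ)

lemma vecPoly_coeff {R : Type*} [Semiring R] {m : ℕ} (v : Fin m → R) (i : Fin m) :
    (vecPoly v).coeff i = v i := by
  simp [vecPoly, finsetSum_coeff, coeff_C_mul, coeff_X_pow, Fin.val_inj]

lemma vecPoly_natDegree_le {R : Type*} [Semiring R] {m : ℕ} (v : Fin (m + 1) → R) :
    (vecPoly v).natDegree ≤ m :=
  natDegree_sum_le_of_forall_le _ _ fun i _ =>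
    (natDegree_C_mul_X_pow_le _ _).trans (Nat.lt_succ_iff.mp i.2)

lemma vecPoly_of_coeff {R : Type*} [Semiring R] {m : ℕ} (f : R[X]) (hf : f.natDegree ≤ m) :
    vecPoly (fun i : Fin (m + 1) => f.coeff i) = f := by
  conv_rhs => rw [f.as_sum_range_C_mul_X_pow' (Nat.lt_succ_of_le hf)]
  exact Fin.sum_univ_eq_sum_range (fun i => C (f.coeff i) * X ^ i) (m + 1)

/-- The counting step: if `B` is a set of tuples `(a, b, w, g)` with `a ≠ 0` such that, in the
coordinates `(a, b, w, h)` with `h = g + s a b w`, the value `-b/a` is always a root of a nonzero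
polynomial `q h` of degree at most `M`, then `B` has density at most `M / p`. -/
lemma card_le_of_fiber_roots {K W G : Type*} [Field K] [Fintype K] [Fintype W] [Fintype G]
    [AddGroup G] (M : ℕ) (s : K → K → W → G) (q : G → K[X]) (hq : ∀ h, (q h).natDegree ≤ M)
    (B : Set (K × K × W × G))
    (hB : ∀ x ∈ B, x.1 ≠ 0 ∧ q (s x.1 x.2.1 x.2.2.1 + x.2.2.2) ≠ 0 ∧
      (q (s x.1 x.2.1 x.2.2.1 + x.2.2.2)).IsRoot (-x.2.1 / x.1)) :
    Fintype.card K * B.ncard ≤ M * Set.ncard {x : K × K × W × G | x.1 ≠ 0} := by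
  classical
  let f : K × K × W × G → K × W × G :=
    fun x => (x.1, x.2.2.1, s x.1 x.2.1 x.2.2.1 + x.2.2.2)
  let N : Finset K := Finset.univ.filter (· ≠ 0)
  let T : Finset (K × W × G) := N ×ˢ Finset.univ
  have hΩ : Set.ncard {x : K × K × W × G | x.1 ≠ 0} = Fintype.card K * T.card := by
    have : {x : K × K × W × G | x.1 ≠ 0} =
        ((N ×ˢ Finset.univ : Finset (K × K × W × G)) : Set (K × K × W × G)) := by
      ext x; simp [N]
    rw [this, Set.ncard_coe_finset]
    simp only [T, Finset.card_product, Finset.card_univ, Fintype.card_prod]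
    ring
  have hBT : B.toFinset.card ≤ M * T.card := by
    refine Finset.card_le_mul_card_image_of_maps_to (f := f) ?_ M ?_
    · intro x hx
      have := (hB x (by simpa using hx)).1
      simp [T, N, f, this]
    · rintro ⟨a, w, h⟩ -
      have hcard : (q h).roots.toFinset.card ≤ M :=
        (Multiset.toFinset_card_le _).trans ((card_roots' _).trans (hq h))
      refine le_trans (Finset.card_le_card_of_injOn (fun x => -x.2.1 / x.1) ?_ ?_) hcard
      · rintro ⟨a', b, w', g⟩ hx
        simp only [Finset.coe_filter, Set.mem_ofPred_eq, Set.mem_toFinset, f, Prod.mk.injEq] at hx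
        obtain ⟨hx, rfl, rfl, rfl⟩ := hx
        have := hB _ hx
        simpa [mem_roots'] using this.2
      · rintro ⟨a₁, b₁, w₁, g₁⟩ hx ⟨a₂, b₂, w₂, g₂⟩ hy hxy
        simp only [Finset.coe_filter, Set.mem_ofPred_eq, Set.mem_toFinset, f, Prod.mk.injEq] at hx hy
        obtain ⟨hx, rfl, rfl, rfl⟩ := hx
        obtain ⟨hy, rfl, rfl, hg⟩ := hy
        have ha : a₂ ≠ 0 := (hB _ hx).1
        have hb : b₁ = b₂ := by
          have : -b₁ / a₂ = -b₂ / a₂ := hxy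
          rw [div_left_inj' ha] at this
          exact neg_injective this
        subst hb
        rw [add_left_cancel hg]
  rw [hΩ, Set.ncard_eq_toFinset_card']
  calc Fintype.card K * B.toFinset.card ≤ Fintype.card K * (M * T.card) := by gcongr
    _ = M * (Fintype.card K * T.card) := by ring

/-- Unforgeable polynomials' linear combination (counting form): over
`F = ZMod p` (`p` prime), with public polynomials `π j` of degree ≤ `d`,
sample `a ≠ 0`, `b`, coefficient vectors `w j` and `g j`, set
`ζ = a·X + b`, `ω j = ∑ᵢ (w j)ᵢ·Xⁱ`, `γ j = ∑ᵢ (g j)ᵢ·Xⁱ` and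
`θ j = ζ·(ω j)·(π j) + γ j`.  For any adversary `A` mapping `(θ_1,…,θ_n)` to
`(δ_1,…,δ_t)` with each `δ_j` of degree ≤ `D`, the proportion of tuples for
which `∑_{j≤t} δ_j ≠ ∑_{j≤t} θ_j` yet
`ζ ∣ (∑_{j≤t} δ_j + ∑_{j>t} θ_j - ∑_j γ_j)` is at most `max D (2d+1) / p`. -/
theorem unforgeable_polynomials_linear_combination (p : ℕ) [Fact p.Prime]
    (d D n t : ℕ) (ht1 : 1 ≤ t) (htn : t ≤ n)
    (π : Fin n → Polynomial (ZMod p)) (hπ : ∀ j, (π j).natDegree ≤ d)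
    (A : (Fin n → Polynomial (ZMod p)) → (Fin t → Polynomial (ZMod p)))
    (hA : ∀ θ j, (A θ j).natDegree ≤ D) :
    p * Set.ncard
        {x : ZMod p × ZMod p × (Fin n → Fin (d + 1) → ZMod p) ×
              (Fin n → Fin (2 * d + 2) → ZMod p) |
          x.1 ≠ 0 ∧
          (let ζ : Polynomial (ZMod p) := Polynomial.C x.1 * Polynomial.X + Polynomial.C x.2.1
           let ω : Fin n → Polynomial (ZMod p) :=
             fun j => ∑ i, Polynomial.C (x.2.2.1 j i) * Polynomial.X ^ (i : ℕ)
           let γ : Fin n → Polynomial (ZMod p) :=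
             fun j => ∑ i, Polynomial.C (x.2.2.2 j i) * Polynomial.X ^ (i : ℕ)
           let θ : Fin n → Polynomial (ZMod p) := fun j => ζ * ω j * π j + γ j
           let δ : Fin t → Polynomial (ZMod p) := A θ
           (∑ j, δ j ≠ ∑ j ∈ Finset.univ.filter (fun j : Fin n => (j : ℕ) < t), θ j) ∧
           ζ ∣ (∑ j, δ j
                + ∑ j ∈ Finset.univ.filter (fun j : Fin n => t ≤ (j : ℕ)), θ j
                - ∑ j, γ j))}
      ≤ max D (2 * d + 1) * Set.ncard
        {x : ZMod p × ZMod p × (Fin n → Fin (d + 1) → ZMod p) ×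
              (Fin n → Fin (2 * d + 2) → ZMod p) |
          x.1 ≠ 0} := by
  classical
  have key := card_le_of_fiber_roots (K := ZMod p) (W := Fin n → Fin (d + 1) → ZMod p)
    (G := Fin n → Fin (2 * d + 2) → ZMod p) (max D (2 * d + 1))
    (fun a b w j i => ((C a * X + C b) * vecPoly (w j) * π j).coeff i)
    (fun h => ∑ j, A (fun j => vecPoly (h j)) j
      - ∑ j ∈ Finset.univ.filter (fun j : Fin n => (j : ℕ) < t), vecPoly (h j))
    (fun h => (natDegree_sub_le _ _).trans (max_le_max
      (natDegree_sum_le_of_forall_le _ _ fun j _ => hA _ j)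
      (natDegree_sum_le_of_forall_le _ _ fun j _ => vecPoly_natDegree_le _)))
  rw [ZMod.card] at key
  refine key _ ?_
  rintro ⟨a, b, w, g⟩ ⟨ha, hne, hdvd⟩
  refine ⟨ha, ?_⟩
  change a ≠ 0 at ha
  dsimp only at hne hdvd ⊢
  simp only [← vecPoly.eq_1] at hne hdvd
  have hθ : (fun j => vecPoly (((fun j (i : Fin (2 * d + 2)) =>
      ((C a * X + C b) * vecPoly (w j) * π j).coeff i) + g) j)) =
      fun j => (C a * X + C b) * vecPoly (w j) * π j + vecPoly (g j) := by
    funext j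
    have hdeg : ((C a * X + C b) * vecPoly (w j) * π j).natDegree ≤ 2 * d + 1 := by
      have h1 : (C a * X + C b).natDegree ≤ 1 := natDegree_linear_le
      have h2 := vecPoly_natDegree_le (w j)
      have h3 := hπ j
      have h4 := natDegree_mul_le (p := (C a * X + C b) * vecPoly (w j)) (q := π j)
      have h5 := natDegree_mul_le (p := C a * X + C b) (q := vecPoly (w j))
      omega
    rw [← vecPoly_of_coeff _ hdeg]
    simp [vecPoly, add_mul, Finset.sum_add_distrib]
  rw [hθ]
  refine ⟨sub_ne_zero.mpr hne, ?_⟩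
  rw [IsRoot.def]
  have hζ : (C a * X + C b).eval (-b / a) = 0 := by
    simp; field_simp; ring
  -- Evaluating at the root of `ζ` kills every `ζ * ω j * π j`, so `θ j` and `γ j` agree there.
  have hev := eval_dvd (x := -b / a) hdvd
  rw [hζ, zero_dvd_iff] at hev
  have hsplit := Finset.sum_filter_add_sum_filter_not (Finset.univ : Finset (Fin n))
    (fun j => (j : ℕ) < t) (fun j => (vecPoly (g j)).eval (-b / a))
  simp only [not_lt] at hsplit
  simp only [eval_sub, eval_add, eval_finsetSum, eval_mul, hζ, zero_mul, zero_add] at hev ⊢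
  linear_combination hev - hsplit
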